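/- arXiv:math/0004049 — 2 statements merged into one kernel-verified Lean document; each statement's English description precedes it below -/
import Mathlib

section
/- If S and T are linear operators on a topological vector space X over ℂ with ST = TS, and both r_c(S) and r_c(T) are finite, then r_c(ST) ≤ r_c(S)·r_c(T). -/
open Filter Topology Bornology Set Pointwise ENNReal

variable {X Y : Type*} [AddCommGroup X] [Module ℂ X] [TopologicalSpace X]
  [AddCommGroup Y] [Module ℂ Y] [TopologicalSpace Y]

/-- `T` maps every bounded set to a bounded set. -/
def IsBBBounded (T : X →ₗ[ℂ] Y) : Prop :=
  ∀ A : Set X, IsVonNBounded ℂ A → IsVonNBounded ℂ (T '' A)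

/-- `T` maps some neighborhood of zero to a bounded set. -/
def IsNBBounded (T : X →ₗ[ℂ] Y) : Prop :=
  ∃ U ∈ 𝓝 (0 : X), IsVonNBounded ℂ (T '' U)

/-- `𝒩` is a base of neighborhoods of zero. -/
def IsZeroBasis (𝒩 : Set (Set X)) : Prop :=
  (∀ U ∈ 𝒩, U ∈ 𝓝 (0 : X)) ∧ ∀ V ∈ 𝓝 (0 : X), ∃ U ∈ 𝒩, U ⊆ V

/-- There is a base of neighborhoods of zero each member of which is mapped by `T`
into a positive multiple of itself. -/
def IsNNBounded (T : X →ₗ[ℂ] X) : Prop :=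
  ∃ 𝒩 : Set (Set X), IsZeroBasis 𝒩 ∧
    ∀ U ∈ 𝒩, ∃ α : ℝ, 0 < α ∧ T '' U ⊆ (α : ℂ) • U

noncomputable def rl (T : X →ₗ[ℂ] X) : ℝ≥0∞ :=
  sInf (ENNReal.ofReal '' {ν : ℝ | 0 < ν ∧ ∀ x : X,
    Tendsto (fun n : ℕ => ((ν : ℂ) ^ n)⁻¹ • (T ^ n) x) atTop (𝓝 0)})

noncomputable def rbb (T : X →ₗ[ℂ] X) : ℝ≥0∞ :=
  sInf (ENNReal.ofReal '' {ν : ℝ | 0 < ν ∧ ∀ A : Set X, IsVonNBounded ℂ A →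
    ∀ V ∈ 𝓝 (0 : X), ∀ᶠ n : ℕ in atTop,
      (fun x => ((ν : ℂ) ^ n)⁻¹ • (T ^ n) x) '' A ⊆ V})

noncomputable def rc (T : X →ₗ[ℂ] X) : ℝ≥0∞ :=
  sInf (ENNReal.ofReal '' {ν : ℝ | 0 < ν ∧ ∀ V ∈ 𝓝 (0 : X), ∃ U ∈ 𝓝 (0 : X),
    ∀ ε : ℝ, 0 < ε → ∀ᶠ n : ℕ in atTop,
      (fun x => ((ν : ℂ) ^ n)⁻¹ • (T ^ n) x) '' U ⊆ (ε : ℂ) • V})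

noncomputable def rnn (T : X →ₗ[ℂ] X) : ℝ≥0∞ :=
  sInf (ENNReal.ofReal '' {ν : ℝ | 0 < ν ∧ ∃ 𝒩 : Set (Set X), IsZeroBasis 𝒩 ∧
    ∀ U ∈ 𝒩, ∀ ε : ℝ, 0 < ε → ∀ᶠ n : ℕ in atTop,
      (fun x => ((ν : ℂ) ^ n)⁻¹ • (T ^ n) x) '' U ⊆ (ε : ℂ) • U})

noncomputable def rnb (T : X →ₗ[ℂ] X) : ℝ≥0∞ :=
  sInf (ENNReal.ofReal '' {ν : ℝ | 0 < ν ∧ ∃ U ∈ 𝓝 (0 : X), ∀ V ∈ 𝓝 (0 : X),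
    ∀ᶠ n : ℕ in atTop, (fun x => ((ν : ℂ) ^ n)⁻¹ • (T ^ n) x) '' U ⊆ V})

/-- The operator `λI - T`. -/
def lamOp (T : X →ₗ[ℂ] X) (l : ℂ) : X →ₗ[ℂ] X := l • LinearMap.id - T

def sigmaL (T : X →ₗ[ℂ] X) : Set ℂ := {l | ¬ Function.Bijective (lamOp T l)}

def sigmaBB (T : X →ₗ[ℂ] X) : Set ℂ :=
  {l | ¬ ∃ S : X →ₗ[ℂ] X, S ∘ₗ lamOp T l = LinearMap.id ∧
    lamOp T l ∘ₗ S = LinearMap.id ∧ IsBBBounded S}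

def sigmaC (T : X →ₗ[ℂ] X) : Set ℂ :=
  {l | ¬ ∃ S : X →ₗ[ℂ] X, S ∘ₗ lamOp T l = LinearMap.id ∧
    lamOp T l ∘ₗ S = LinearMap.id ∧ Continuous S}

def sigmaNN (T : X →ₗ[ℂ] X) : Set ℂ :=
  {l | ¬ ∃ S : X →ₗ[ℂ] X, S ∘ₗ lamOp T l = LinearMap.id ∧
    lamOp T l ∘ₗ S = LinearMap.id ∧ IsNNBounded S}

def sigmaNB (T : X →ₗ[ℂ] X) : Set ℂ :=
  {l | ¬ ∃ (α : ℂ) (S : X →ₗ[ℂ] X), IsNBBounded S ∧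
    (α • LinearMap.id + S) ∘ₗ lamOp T l = LinearMap.id ∧
    lamOp T l ∘ₗ (α • LinearMap.id + S) = LinearMap.id}

/-- Partial sums of the Neumann series. -/
noncomputable def neumann (T : X →ₗ[ℂ] X) (l : ℂ) (n : ℕ) (x : X) : X :=
  ∑ i ∈ Finset.range (n + 1), (l ^ (i + 1))⁻¹ • (T ^ i) x

/-- Every Cauchy sequence converges. -/
def SeqComplete (X : Type*) [AddCommGroup X] [TopologicalSpace X] : Prop :=
  ∀ u : ℕ → X, (∀ V ∈ 𝓝 (0 : X), ∃ N : ℕ, ∀ m ≥ N, ∀ n ≥ N, u m - u n ∈ V) →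
    ∃ x : X, Tendsto u atTop (𝓝 x)

/-- `K` maps some neighborhood of zero to a set with compact closure. -/
def IsCompactOp (K : X →ₗ[ℂ] X) : Prop :=
  ∃ U ∈ 𝓝 (0 : X), IsCompact (closure (K '' U))

/-- The maps `f i` tend to zero equicontinuously along `l`: a single neighborhood `U` of zero
is eventually mapped into every positive multiple of a prescribed neighborhood `V`. As in the
definition of `rc`, the multiples are `(ε : ℂ) • V` with `ε` real. -/
def EquiTendstoZero {ι E F : Type*} [Zero E] [TopologicalSpace E] [Zero F] [TopologicalSpace F]
    [SMul ℂ F] (l : Filter ι) (f : ι → E → F) : Prop :=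
  ∀ V ∈ 𝓝 (0 : F), ∃ U ∈ 𝓝 (0 : E), ∀ ε : ℝ, 0 < ε → ∀ᶠ i in l, f i '' U ⊆ (ε : ℂ) • V

namespace EquiTendstoZero

variable {ι E F G : Type*} {l : Filter ι} [Zero E] [TopologicalSpace E]
  [Zero F] [TopologicalSpace F] [Zero G] [TopologicalSpace G]

theorem tendsto_prod [MulAction ℂ F] {f : ι → E → F} (hf : EquiTendstoZero l f) :
    Tendsto (fun p : ι × E => f p.1 p.2) (l ×ˢ 𝓝 0) (𝓝 0) := by
  intro V hV
  obtain ⟨U, hU, hfU⟩ := hf V hV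
  have hfUV : ∀ᶠ i in l, f i '' U ⊆ V := by
    simpa only [Complex.ofReal_one, one_smul] using hfU 1 one_pos
  refine mem_map.2 (mem_of_superset (prod_mem_prod hfUV hU) ?_)
  rintro ⟨i, x⟩ ⟨hi, hx⟩
  exact hi (mem_image_of_mem _ hx)

/- The limit along `l ×ˢ 𝓝 0` says that the `g i` are eventually equicontinuous at zero, which is
enough because the small factor `ε` is supplied by `f i` alone. -/
theorem comp [SMul ℂ G] {f : ι → F → G} {g : ι → E → F} (hf : EquiTendstoZero l f)
    (hg : Tendsto (fun p : ι × E => g p.1 p.2) (l ×ˢ 𝓝 0) (𝓝 0)) :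
    EquiTendstoZero l fun i => f i ∘ g i := by
  intro V hV
  obtain ⟨W, hW, hfW⟩ := hf V hV
  obtain ⟨s, hs, U, hU, hgU⟩ := mem_prod_iff.1 (hg hW)
  refine ⟨U, hU, fun ε hε => ?_⟩
  filter_upwards [hfW ε hε, hs] with i hfi hi
  have hgi : g i '' U ⊆ W := image_subset_iff.2 fun x hx => hgU (mk_mem_prod hi hx)
  calc
    (f i ∘ g i) '' U = f i '' (g i '' U) := image_comp _ _ _
    _ ⊆ f i '' W := image_mono hgi
    _ ⊆ (ε : ℂ) • V := hfi

end EquiTendstoZero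

theorem inv_pow_smul_mul_pow_of_commute {M A : Type*} [DivisionCommMonoid M] [Monoid A]
    [MulAction M A] [IsScalarTower M A A] [SMulCommClass M A A]
    {a b : A} (h : Commute a b) (r s : M) (n : ℕ) :
    ((r * s) ^ n)⁻¹ • (a * b) ^ n = ((r ^ n)⁻¹ • a ^ n) * ((s ^ n)⁻¹ • b ^ n) := by
  rw [h.mul_pow, mul_pow, mul_inv, smul_mul_smul_comm]

/-- The numbers `ν` whose infimum is `rc T`: those `ν > 0` for which `T ^ n / ν ^ n` tends to
zero equicontinuously. -/
def IsEquiNullScale (T : X →ₗ[ℂ] X) (ν : ℝ) : Prop :=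
  0 < ν ∧ EquiTendstoZero atTop fun (n : ℕ) (x : X) => ((ν : ℂ) ^ n)⁻¹ • (T ^ n) x

theorem IsEquiNullScale.mul {S T : X →ₗ[ℂ] X} {μ ν : ℝ} (hS : IsEquiNullScale S μ)
    (hT : IsEquiNullScale T ν) (hcomm : Commute S T) : IsEquiNullScale (S * T) (μ * ν) := by
  have hpow (n : ℕ) (x : X) : (((μ * ν : ℝ) : ℂ) ^ n)⁻¹ • ((S * T) ^ n) x =
      ((μ : ℂ) ^ n)⁻¹ • (S ^ n) (((ν : ℂ) ^ n)⁻¹ • (T ^ n) x) := by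
    rw [Complex.ofReal_mul]
    exact LinearMap.congr_fun (inv_pow_smul_mul_pow_of_commute hcomm (μ : ℂ) ν n) x
  refine ⟨mul_pos hS.1 hT.1, ?_⟩
  simp only [hpow]
  exact hS.2.comp hT.2.tendsto_prod

theorem IsEquiNullScale.rc_le_ofReal {T : X →ₗ[ℂ] X} {ν : ℝ} (hν : IsEquiNullScale T ν) :
    rc T ≤ ENNReal.ofReal ν :=
  sInf_le (mem_image_of_mem _ hν)

theorem exists_isEquiNullScale_of_rc_lt {T : X →ₗ[ℂ] X} {a : ℝ≥0∞} (ha : rc T < a) :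
    ∃ ν, IsEquiNullScale T ν ∧ ENNReal.ofReal ν < a := by
  obtain ⟨_, ⟨ν, hν, rfl⟩, hνa⟩ := sInf_lt_iff.1 ha
  exact ⟨ν, hν, hνa⟩

/-- If `S` and `T` commute and `r_c(S), r_c(T)` are finite, then
`r_c(ST) ≤ r_c(S)·r_c(T)`. -/
theorem rc_mul_le_of_commute (S T : X →ₗ[ℂ] X) (hcomm : S * T = T * S)
    (hS : rc S < ⊤) (hT : rc T < ⊤) :
    rc (S * T) ≤ rc S * rc T := by
  refine ENNReal.le_mul_of_forall_lt (Or.inr hT.ne) (Or.inl hS.ne) fun a ha b hb => ?_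
  obtain ⟨μ, hμ, hμa⟩ := exists_isEquiNullScale_of_rc_lt ha
  obtain ⟨ν, hν, hνb⟩ := exists_isEquiNullScale_of_rc_lt hb
  calc
    rc (S * T) ≤ ENNReal.ofReal (μ * ν) := (hμ.mul hν hcomm).rc_le_ofReal
    _ = ENNReal.ofReal μ * ENNReal.ofReal ν := ENNReal.ofReal_mul hμ.1.le
    _ ≤ a * b := mul_le_mul' hμa.le hνb.le
end

section
/- If T is an nb-bounded linear operator on a topological vector space X over ℂ, then r_bb(T) = r_c(T) = r_nn(T) = r_nb(T). -/
open Filter Topology Bornology Set Pointwise ENNReal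

variable {X Y : Type*} [AddCommGroup X] [Module ℂ X] [TopologicalSpace X]
  [AddCommGroup Y] [Module ℂ Y] [TopologicalSpace Y]

/-!
For operators, nn-convergence to zero implies c-convergence, which implies uniform convergence on
bounded sets; this gives `rbb T ≤ rc T ≤ rnn T` for every `T`. An nb-bounded `T` closes the cycle.
If `T U` is bounded, then `T ^ (n + 1) U = T ^ n (T U)` turns convergence on bounded sets into
convergence on `U`, so `rnb T ≤ rbb T`. If moreover the iterates scaled by `ν` converge to zero
uniformly on a neighborhood `U'` of zero and `ν < ν'`, then for large `n` the set `T U` lies in the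
multiple of `U'` by `ε ν' (ν' / ν) ^ n`, so the iterates scaled by `ν'` carry `U` into `ε V` for
every neighborhood `V` and all `ε > 0`; the neighborhoods contained in `U` are the required base,
and `rnn T ≤ rnb T`.
-/

theorem sInf_image_le_sInf_image_of_forall_Ioi_subset {α β : Type*} [LinearOrder α]
    [TopologicalSpace α] [OrderTopology α] [DenselyOrdered α] [NoMaxOrder α]
    [CompleteLattice β] [TopologicalSpace β] [ClosedIciTopology β] {f : α → β} (hf : Continuous f)
    {s t : Set α} (h : ∀ a ∈ s, Ioi a ⊆ t) : sInf (f '' t) ≤ sInf (f '' s) := by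
  refine le_sInf (forall_mem_image.2 fun a ha => ?_)
  refine ge_of_tendsto ((hf.tendsto a).mono_left nhdsWithin_le_nhds : Tendsto f (𝓝[>] a) _) ?_
  filter_upwards [self_mem_nhdsWithin] with b hb
  exact sInf_le (mem_image_of_mem f (h a ha hb))

theorem eventually_image_pow_image_subset_iff {R M : Type*} [Semiring R] [AddCommMonoid M]
    [Module R M] (S : Module.End R M) {A B : Set M} :
    (∀ᶠ n : ℕ in atTop, ⇑(S ^ n) '' (S '' A) ⊆ B) ↔ ∀ᶠ n : ℕ in atTop, ⇑(S ^ n) '' A ⊆ B := by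
  conv_rhs => rw [← map_add_atTop_eq_nat 1, eventually_map]
  simp only [pow_succ, Module.End.coe_mul, image_comp]

section Absorbs

variable {𝕜 E : Type*} [NormedDivisionRing 𝕜]

theorem absorbs_smul_set_right [MulAction 𝕜 E] {U A : Set E} {c : 𝕜} (hc : c ≠ 0)
    (h : Absorbs 𝕜 U A) : Absorbs 𝕜 U (c • A) := by
  rw [Absorbs, ← map_mul_left_cobounded hc, eventually_map]
  filter_upwards [h] with a ha
  rw [mul_smul]
  exact smul_set_mono ha

theorem isVonNBounded_smul_set [AddCommMonoid E] [Module 𝕜 E] [TopologicalSpace E] {A : Set E}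
    (h : IsVonNBounded 𝕜 A) (c : 𝕜) : IsVonNBounded 𝕜 (c • A) := by
  intro V hV
  obtain rfl | hc := eq_or_ne c 0
  · exact (Absorbs.zero (mem_of_mem_nhds hV)).mono_right (zero_smul_set_subset A)
  · exact absorbs_smul_set_right hc (h hV)

end Absorbs

theorem linearMap_smul_image {R M N : Type*} [CommSemiring R] [AddCommMonoid M] [Module R M]
    [AddCommMonoid N] [Module R N] (c : R) (f : M →ₗ[R] N) (A : Set M) :
    ⇑(c • f) '' A = c • f '' A :=
  (image_image (c • ·) f A).symm

theorem eventually_smul_image_subset_smul_set {𝕜 E F ι : Type*} [NormedField 𝕜]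
    [AddCommMonoid E] [Module 𝕜 E] [AddCommMonoid F] [Module 𝕜 F] {l : Filter ι}
    {L : ι → E →ₗ[𝕜] F} {U A : Set E} {V : Set F} (hA : Absorbs 𝕜 U A)
    (hL : ∀ᶠ i in l, L i '' U ⊆ V) {a : ι → 𝕜} (ha : Tendsto a l (𝓝[≠] 0)) {c : 𝕜} (hc : c ≠ 0) :
    ∀ᶠ i in l, ⇑(a i • L i) '' A ⊆ c • V := by
  have hscale : Tendsto (fun i => c * (a i)⁻¹) l (cobounded 𝕜) :=
    (tendsto_mul_left_cobounded hc).comp (tendsto_inv₀_nhdsNE_zero.comp ha)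
  filter_upwards [hL, hscale.eventually hA, ha.eventually self_mem_nhdsWithin] with i hU hAU hi
  calc ⇑(a i • L i) '' A ⊆ ⇑(a i • L i) '' ((c * (a i)⁻¹) • U) := image_mono hAU
    _ = c • L i '' U := by
      rw [image_smul_set, linearMap_smul_image, mul_smul, inv_smul_smul₀ hi]
    _ ⊆ c • V := smul_set_mono hU

theorem IsNBBounded.smul {T : X →ₗ[ℂ] Y} (hT : IsNBBounded T) (c : ℂ) : IsNBBounded (c • T) := by
  obtain ⟨U, hU, hb⟩ := hT
  exact ⟨U, hU, linearMap_smul_image c T U ▸ isVonNBounded_smul_set hb c⟩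

theorem isZeroBasis_nhds_subset {E : Type*} [AddCommGroup E] [TopologicalSpace E] {U : Set E}
    (hU : U ∈ 𝓝 0) : IsZeroBasis {W : Set E | W ∈ 𝓝 0 ∧ W ⊆ U} :=
  ⟨fun _ hW => hW.1, fun V hV =>
    ⟨V ∩ U, ⟨inter_mem hV hU, inter_subset_right⟩, inter_subset_left⟩⟩

section Convergence

variable {ι : Type*}

/-- bb-convergence to zero of a family of operators along `l`: uniform convergence on every
bounded set. -/
def BBTendstoZero (F : ι → X →ₗ[ℂ] Y) (l : Filter ι) : Prop :=
  ∀ A : Set X, IsVonNBounded ℂ A → ∀ V ∈ 𝓝 (0 : Y), ∀ᶠ i in l, F i '' A ⊆ V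

/-- c-convergence to zero of a family of operators along `l`, an asymptotic form of
equicontinuity; `U` may depend on `V` but not on `ε`. -/
def CTendstoZero (F : ι → X →ₗ[ℂ] Y) (l : Filter ι) : Prop :=
  ∀ V ∈ 𝓝 (0 : Y), ∃ U ∈ 𝓝 (0 : X), ∀ ε : ℝ, 0 < ε → ∀ᶠ i in l, F i '' U ⊆ (ε : ℂ) • V

/-- nn-convergence to zero of a family of operators along `l`: the members of some base of
neighborhoods of zero are eventually mapped into arbitrarily small multiples of themselves. -/
def NNTendstoZero (F : ι → X →ₗ[ℂ] X) (l : Filter ι) : Prop :=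
  ∃ 𝒩 : Set (Set X), IsZeroBasis 𝒩 ∧
    ∀ U ∈ 𝒩, ∀ ε : ℝ, 0 < ε → ∀ᶠ i in l, F i '' U ⊆ (ε : ℂ) • U

/-- nb-convergence to zero of a family of operators along `l`: uniform convergence on some
neighborhood of zero. -/
def NBTendstoZero (F : ι → X →ₗ[ℂ] Y) (l : Filter ι) : Prop :=
  ∃ U ∈ 𝓝 (0 : X), ∀ V ∈ 𝓝 (0 : Y), ∀ᶠ i in l, F i '' U ⊆ V

variable {l : Filter ι}

theorem NNTendstoZero.cTendstoZero {F : ι → X →ₗ[ℂ] X} (h : NNTendstoZero F l) :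
    CTendstoZero F l := by
  obtain ⟨𝒩, ⟨h𝒩, hbasis⟩, h⟩ := h
  intro V hV
  obtain ⟨U, hU, hUV⟩ := hbasis V hV
  exact ⟨U, h𝒩 U hU, fun ε hε => (h U hU ε hε).mono fun _ hi => hi.trans (smul_set_mono hUV)⟩

theorem CTendstoZero.bbTendstoZero {F : ι → X →ₗ[ℂ] Y} (h : CTendstoZero F l) :
    BBTendstoZero F l := by
  intro A hA V hV
  obtain ⟨U, hU, hF⟩ := h V hV
  obtain ⟨R, hAU, hR⟩ : ∃ R : ℝ, A ⊆ (R : ℂ) • U ∧ 0 < R :=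
    (((RCLike.tendsto_ofReal_atTop_cobounded ℂ).eventually (hA hU)).and
      (eventually_gt_atTop 0)).exists
  filter_upwards [hF R⁻¹ (inv_pos.2 hR)] with i hi
  calc F i '' A ⊆ F i '' ((R : ℂ) • U) := image_mono hAU
    _ = (R : ℂ) • F i '' U := image_smul_set (F i) (R : ℂ) U
    _ ⊆ (R : ℂ) • ((R⁻¹ : ℝ) : ℂ) • V := smul_set_mono hi
    _ = V := by rw [Complex.ofReal_inv, smul_inv_smul₀ (Complex.ofReal_ne_zero.2 hR.ne')]

end Convergence

section Powers

variable {S : X →ₗ[ℂ] X}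

theorem BBTendstoZero.nbTendstoZero_pow (h : BBTendstoZero (S ^ ·) atTop) (hS : IsNBBounded S) :
    NBTendstoZero (S ^ ·) atTop := by
  obtain ⟨U, hU, hb⟩ := hS
  exact ⟨U, hU, fun V hV => (eventually_image_pow_image_subset_iff S).1 (h _ hb V hV)⟩

theorem NBTendstoZero.nnTendstoZero_smul_pow (h : NBTendstoZero (S ^ ·) atTop)
    (hS : IsNBBounded S) {r : ℂ} (hr₀ : r ≠ 0) (hr₁ : ‖r‖ < 1) :
    NNTendstoZero ((r • S) ^ ·) atTop := by
  obtain ⟨U, hU, hb⟩ := hS.smul r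
  obtain ⟨U', hU', hpow⟩ := h
  have hr : Tendsto (r ^ ·) atTop (𝓝[≠] 0) :=
    tendsto_nhdsWithin_iff.2 ⟨tendsto_pow_atTop_nhds_zero_of_norm_lt_one hr₁,
      .of_forall fun n => pow_ne_zero n hr₀⟩
  have hsmall : ∀ V ∈ 𝓝 (0 : X), ∀ ε : ℝ, 0 < ε →
      ∀ᶠ n : ℕ in atTop, ⇑((r • S) ^ n) '' U ⊆ (ε : ℂ) • V := by
    intro V hV ε hε
    rw [← eventually_image_pow_image_subset_iff]
    simp only [smul_pow]
    exact eventually_smul_image_subset_smul_set (hb hU') (hpow V hV) hr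
      (Complex.ofReal_ne_zero.2 hε.ne')
  exact ⟨_, isZeroBasis_nhds_subset hU, fun W ⟨hW, hWU⟩ ε hε =>
    (hsmall W hW ε hε).mono fun _ hn => (image_mono hWU).trans hn⟩

end Powers

section SpectralRadii

variable (T : X →ₗ[ℂ] X)

theorem rbb_eq_sInf : rbb T = sInf (ENNReal.ofReal ''
    {ν : ℝ | 0 < ν ∧ BBTendstoZero (((ν : ℂ)⁻¹ • T) ^ ·) atTop}) := by
  simp only [smul_pow, inv_pow]; rfl

theorem rc_eq_sInf : rc T = sInf (ENNReal.ofReal ''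
    {ν : ℝ | 0 < ν ∧ CTendstoZero (((ν : ℂ)⁻¹ • T) ^ ·) atTop}) := by
  simp only [smul_pow, inv_pow]; rfl

theorem rnn_eq_sInf : rnn T = sInf (ENNReal.ofReal ''
    {ν : ℝ | 0 < ν ∧ NNTendstoZero (((ν : ℂ)⁻¹ • T) ^ ·) atTop}) := by
  simp only [smul_pow, inv_pow]; rfl

theorem rnb_eq_sInf : rnb T = sInf (ENNReal.ofReal ''
    {ν : ℝ | 0 < ν ∧ NBTendstoZero (((ν : ℂ)⁻¹ • T) ^ ·) atTop}) := by
  simp only [smul_pow, inv_pow]; rfl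

theorem rbb_le_rc : rbb T ≤ rc T := by
  rw [rbb_eq_sInf, rc_eq_sInf]
  exact sInf_le_sInf (image_mono fun _ ⟨hν, h⟩ => ⟨hν, h.bbTendstoZero⟩)

theorem rc_le_rnn : rc T ≤ rnn T := by
  rw [rc_eq_sInf, rnn_eq_sInf]
  exact sInf_le_sInf (image_mono fun _ ⟨hν, h⟩ => ⟨hν, h.cTendstoZero⟩)

variable {T}

theorem IsNBBounded.rnb_le_rbb (hT : IsNBBounded T) : rnb T ≤ rbb T := by
  rw [rnb_eq_sInf, rbb_eq_sInf]
  exact sInf_le_sInf (image_mono fun _ ⟨hν, h⟩ => ⟨hν, h.nbTendstoZero_pow (hT.smul _)⟩)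

theorem IsNBBounded.rnn_le_rnb (hT : IsNBBounded T) : rnn T ≤ rnb T := by
  rw [rnn_eq_sInf, rnb_eq_sInf]
  refine sInf_image_le_sInf_image_of_forall_Ioi_subset ENNReal.continuous_ofReal ?_
  rintro ν ⟨hν, h⟩ ν' (hlt : ν < ν')
  have hν' : 0 < ν' := hν.trans hlt
  have hν₀ : (ν : ℂ) ≠ 0 := Complex.ofReal_ne_zero.2 hν.ne'
  have hν'₀ : (ν' : ℂ) ≠ 0 := Complex.ofReal_ne_zero.2 hν'.ne'
  have hratio : ‖(ν / ν' : ℂ)‖ < 1 := by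
    rw [norm_div, Complex.norm_of_nonneg hν.le, Complex.norm_of_nonneg hν'.le]
    exact (div_lt_one hν').2 hlt
  have hrescale : (ν / ν' : ℂ) • (ν : ℂ)⁻¹ • T = (ν' : ℂ)⁻¹ • T := by
    rw [smul_smul]
    congr 1
    field_simp
  exact ⟨hν', hrescale ▸
    h.nnTendstoZero_smul_pow (hT.smul _) (div_ne_zero hν₀ hν'₀) hratio⟩

end SpectralRadii

/-- For an nb-bounded operator `T`, `r_bb(T) = r_c(T) = r_nn(T) = r_nb(T)`. -/
theorem rbb_eq_rc_eq_rnn_eq_rnb (T : X →ₗ[ℂ] X) (hT : IsNBBounded T) :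
    rbb T = rc T ∧ rc T = rnn T ∧ rnn T = rnb T := by
  have hbb_c : rbb T ≤ rc T := rbb_le_rc T
  have hc_nn : rc T ≤ rnn T := rc_le_rnn T
  have hnn_nb : rnn T ≤ rnb T := hT.rnn_le_rnb
  have hnb_bb : rnb T ≤ rbb T := hT.rnb_le_rbb
  exact ⟨hbb_c.antisymm (hc_nn.trans (hnn_nb.trans hnb_bb)),
    hc_nn.antisymm (hnn_nb.trans (hnb_bb.trans hbb_c)),
    hnn_nb.antisymm (hnb_bb.trans (hbb_c.trans hc_nn))⟩
end
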